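/- In the setting of the previous linear convergence result (quadratic growth with parameter α > 0, δ-strict-complementarity-type decomposition assumption ∑Δ*_i ≤ min{1, δ⁻¹h_t + √(κh_t)}, C ≥ f(x_1) − f*, M_1 ≥ max{ 4β/α + 8βD_{F*}²·max{2κ, δ⁻¹}, 1/2 }), suppose additionally that 2κ ≤ δ⁻¹ and κ > 0, let M_2 ≥ max{ 4β/α + 16βκD_{F*}², 1/2 }, and let τ ≥ 4M_1·log(C/(δ²κ)) + 1. If for all iterations t < τ the algorithm uses ρ_t = min{ √( 2·max{2κ, δ⁻¹}·C·exp(−(t−1)/(4M_1)) ), 1 } / (2M_1) and for all t ≥ τ it uses ρ_t = min{ 2δκ·exp(−(t−τ)/(8M_2)), 1 } / (2M_2), then for all t ≥ τ: f(x_t) − f* ≤ δ²κ·exp(−(t−τ)/(4M_2)). -/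

import Mathlib

open scoped RealInnerProductSpace BigOperators
open Metric

/-!
Let `y` be the minimiser closest to `x t` and `h` the current gap. By the decomposition property `y`
lies on a segment from the hull of the current vertices to a point `z` of `F`, at position `S`, for
any `S ≤ 1` that is at least the bound on the transferred mass. Replacing `z` by the oracle's answer
`w` and moving from `x t` a fraction `η = 1 / (2 M)` of the way to the result gives a competitor for
`x (t + 1)`. With `ρ = η S` the proximal term of the oracle cancels the uncontrolled `‖w - x t‖ ^ 2`
in the descent lemma, which leaves `(1 - η) h + β η² (2 ‖x t - y‖² + 4 S² D²)`. If `S² ≤ q H` for a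
majorant `H` of `h`, quadratic growth turns this into a contraction of `H` by `1 - 1 / (4 M)`.

While `h` is large, `S²` has to be of order `max (2 κ) δ⁻¹ H`. Once `h ≤ δ² κ`, the linear term
`δ⁻¹ h` of the mass bound is dominated by the square root, so that `S²` of order `κ H` suffices.
-/

section SmoothConvex

variable {E : Type*} [NormedAddCommGroup E] [InnerProductSpace ℝ E] [CompleteSpace E]
  {s : Set E} {f : E → ℝ} {g : E → E} {p x y : E}

lemma hasDerivAt_comp_lineMap_of_hasGradientAt {r : ℝ}
    (hf : HasGradientAt f p (AffineMap.lineMap x y r)) :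
    HasDerivAt (fun r : ℝ => f (AffineMap.lineMap x y r)) ⟪p, y - x⟫ r := by
  have hcomp := hf.hasFDerivAt.comp_hasDerivAt r AffineMap.hasDerivAt_lineMap
  rwa [InnerProductSpace.toDual_apply_apply] at hcomp

lemma add_inner_le_of_convexOn (hf : ConvexOn ℝ s f) (hx : x ∈ s) (hy : y ∈ s)
    (hp : HasGradientAt f p x) : f x + ⟪p, y - x⟫ ≤ f y := by
  have hconv := hf.comp_affineMap (AffineMap.lineMap x y : ℝ →ᵃ[ℝ] E)
  have hderiv : HasDerivAt (fun r : ℝ => f (AffineMap.lineMap x y r)) ⟪p, y - x⟫ 0 :=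
    hasDerivAt_comp_lineMap_of_hasGradientAt (by simpa using hp)
  have hslope := hconv.le_slope_of_hasDerivAt (x := 0) (y := 1) (by simpa using hx)
    (by simpa using hy) zero_lt_one hderiv
  simp only [slope_def_field, Function.comp_apply, AffineMap.lineMap_apply_one,
    AffineMap.lineMap_apply_zero, sub_zero, div_one] at hslope
  linarith

lemma le_add_inner_add_sq_of_lipschitz_gradient {β : ℝ} (hs : Convex ℝ s) (hx : x ∈ s) (hy : y ∈ s)
    (hg : ∀ z ∈ s, HasGradientAt f (g z) z) (hlip : ∀ z ∈ s, ‖g z - g x‖ ≤ β * ‖z - x‖) :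
    f y ≤ f x + ⟪g x, y - x⟫ + β / 2 * ‖y - x‖ ^ 2 := by
  have hmem : ∀ r ∈ Set.Icc (0 : ℝ) 1, AffineMap.lineMap x y r ∈ s := fun r hr =>
    hs.lineMap_mem hx hy hr
  have hderiv : ∀ r ∈ Set.Icc (0 : ℝ) 1, HasDerivAt (fun r : ℝ => f (AffineMap.lineMap x y r))
      ⟪g (AffineMap.lineMap x y r), y - x⟫ r := fun r hr =>
    hasDerivAt_comp_lineMap_of_hasGradientAt (hg _ (hmem r hr))
  have hmodel : ∀ r : ℝ, HasDerivAt
      (fun r : ℝ => f x + r * ⟪g x, y - x⟫ + r ^ 2 * (β / 2 * ‖y - x‖ ^ 2))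
      (⟪g x, y - x⟫ + r * (β * ‖y - x‖ ^ 2)) r := by
    intro r
    refine ((((hasDerivAt_id r).mul_const ⟪g x, y - x⟫).const_add (f x)).add
      ((hasDerivAt_pow 2 r).mul_const (β / 2 * ‖y - x‖ ^ 2))).congr_deriv ?_
    push_cast
    ring
  have hslope : ∀ r ∈ Set.Ico (0 : ℝ) 1, ⟪g (AffineMap.lineMap x y r), y - x⟫
      ≤ ⟪g x, y - x⟫ + r * (β * ‖y - x‖ ^ 2) := by
    intro r hr
    have hnorm : ‖AffineMap.lineMap x y r - x‖ = r * ‖y - x‖ := by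
      rw [AffineMap.lineMap_apply_module', add_sub_cancel_right, norm_smul,
        Real.norm_of_nonneg hr.1]
    calc ⟪g (AffineMap.lineMap x y r), y - x⟫
        = ⟪g x, y - x⟫ + ⟪g (AffineMap.lineMap x y r) - g x, y - x⟫ := by
          rw [inner_sub_left]; ring
      _ ≤ ⟪g x, y - x⟫ + ‖g (AffineMap.lineMap x y r) - g x‖ * ‖y - x‖ := by
          gcongr; exact real_inner_le_norm _ _
      _ ≤ ⟪g x, y - x⟫ + β * (r * ‖y - x‖) * ‖y - x‖ := by
          gcongr; exact hnorm ▸ hlip _ (hmem r (Set.Ico_subset_Icc_self hr))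
      _ = _ := by ring
  have hle := image_le_of_deriv_right_le_deriv_boundary
    (fun r hr => (hderiv r hr).continuousAt.continuousWithinAt)
    (fun r hr => (hderiv r (Set.Ico_subset_Icc_self hr)).hasDerivWithinAt)
    (by simp) (fun r _ => (hmodel r).continuousAt.continuousWithinAt)
    (fun r _ => (hmodel r).hasDerivWithinAt) hslope (Set.right_mem_Icc.2 zero_le_one)
  simpa using hle

end SmoothConvex

lemma norm_add_sq_le {E : Type*} [SeminormedAddGroup E] (a b : E) :
    ‖a + b‖ ^ 2 ≤ 2 * (‖a‖ ^ 2 + ‖b‖ ^ 2) :=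
  (pow_le_pow_left₀ (norm_nonneg _) (norm_add_le a b) 2).trans add_sq_le

lemma norm_add_smul_sub_sub_sq_le {E : Type*} [SeminormedAddCommGroup E] [NormedSpace ℝ E] {D : ℝ}
    {x y z w : E} (S : ℝ) (hyz : ‖y - z‖ ≤ D) :
    ‖y + S • (w - z) - x‖ ^ 2
      ≤ 4 * ((1 - S) ^ 2 * ‖x - y‖ ^ 2 + S ^ 2 * D ^ 2) + 2 * S ^ 2 * ‖w - x‖ ^ 2 := by
  have hsplit : y + S • (w - z) - x = ((1 - S) • (y - x) + S • (y - z)) + S • (w - x) := by module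
  have hD : ‖y - z‖ ^ 2 ≤ D ^ 2 := pow_le_pow_left₀ (norm_nonneg _) hyz 2
  calc ‖y + S • (w - z) - x‖ ^ 2
      ≤ 2 * (2 * (‖(1 - S) • (y - x)‖ ^ 2 + ‖S • (y - z)‖ ^ 2) + ‖S • (w - x)‖ ^ 2) := by
        rw [hsplit]
        grw [norm_add_sq_le, norm_add_sq_le]
    _ = 4 * ((1 - S) ^ 2 * ‖x - y‖ ^ 2 + S ^ 2 * ‖y - z‖ ^ 2) + 2 * S ^ 2 * ‖w - x‖ ^ 2 := by
        simp only [norm_smul, mul_pow, Real.norm_eq_abs, sq_abs, norm_sub_rev y x]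
        ring
    _ ≤ _ := by gcongr

lemma exists_infDist_eq_dist_of_isComplete_convex {E : Type*} [NormedAddCommGroup E]
    [InnerProductSpace ℝ E] {s : Set E} (hne : s.Nonempty) (hs : IsComplete s)
    (hconv : Convex ℝ s) (x : E) : ∃ y ∈ s, infDist x s = dist x y := by
  obtain ⟨y, hy, hmin⟩ := exists_norm_eq_iInf_of_complete_convex hne hs hconv x
  exact ⟨y, hy, by simp only [infDist_eq_iInf, dist_eq_norm, hmin]⟩

section Transfer

variable {E : Type*} [AddCommGroup E] [Module ℝ E] {ι : Type*} [Fintype ι]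
  {lam Δ : ι → ℝ} {v : ι → E} {F : Set E} {m S : ℝ} {u y z : E}

/-- The point `y` arises from the convex combination `∑ i, lam i • v i` by moving mass `Δ i` from
each `v i` to one point `z` of `F`, the total mass moved being at most `m`. -/
def TransfersMass (lam : ι → ℝ) (v : ι → E) (F : Set E) (m : ℝ) (y : E) : Prop :=
  ∃ Δ : ι → ℝ, ∃ z ∈ F, (∀ i, Δ i ∈ Set.Icc 0 (lam i)) ∧
    y = ∑ i, (lam i - Δ i) • v i + (∑ i, Δ i) • z ∧ ∑ i, Δ i ≤ m

lemma TransfersMass.mono {m' : ℝ} (hy : TransfersMass lam v F m y) (hm : m ≤ m') :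
    TransfersMass lam v F m' y := by
  obtain ⟨Δ, z, hz, hΔ, heq, hle⟩ := hy
  exact ⟨Δ, z, hz, hΔ, heq, hle.trans hm⟩

lemma TransfersMass.nonneg (hy : TransfersMass lam v F m y) : 0 ≤ m := by
  obtain ⟨Δ, -, -, hΔ, -, hle⟩ := hy
  exact (Finset.sum_nonneg fun i _ => (hΔ i).1).trans hle

lemma sum_smul_mem_convexHull_range (hlam : ∀ i, 0 ≤ lam i) (hsum : ∑ i, lam i = 1) :
    ∑ i, lam i • v i ∈ convexHull ℝ (Set.range v) :=
  (convex_convexHull ℝ _).sum_mem (fun i _ => hlam i) hsum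
    fun i _ => subset_convexHull ℝ _ (Set.mem_range_self i)

lemma exists_sum_sub_smul_add_smul_eq_lineMap (hsum : ∑ i, lam i = 1)
    (hΔ : ∀ i, Δ i ∈ Set.Icc 0 (lam i)) (z : E) :
    ∃ u ∈ convexHull ℝ (Set.range v),
      ∑ i, (lam i - Δ i) • v i + (∑ i, Δ i) • z = AffineMap.lineMap u z (∑ i, Δ i) := by
  have hnonneg : ∀ i, 0 ≤ lam i - Δ i := fun i => sub_nonneg.2 (hΔ i).2
  have hrest : ∑ i, (lam i - Δ i) = 1 - ∑ i, Δ i := by rw [Finset.sum_sub_distrib, hsum]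
  rcases (hrest ▸ Finset.sum_nonneg fun i _ => hnonneg i : 0 ≤ 1 - ∑ i, Δ i).eq_or_lt with h1 | h1
  · have hzero : ∀ i, lam i - Δ i = 0 := fun i =>
      (Finset.sum_eq_zero_iff_of_nonneg fun i _ => hnonneg i).1 (hrest.trans h1.symm) i
        (Finset.mem_univ i)
    refine ⟨_, sum_smul_mem_convexHull_range (fun i => (hΔ i).1.trans (hΔ i).2) hsum, ?_⟩
    rw [← sub_eq_zero.1 h1.symm, AffineMap.lineMap_apply_one]
    simp only [hzero, zero_smul, Finset.sum_const_zero, one_smul, zero_add]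
  · refine ⟨∑ i, ((lam i - Δ i) / (1 - ∑ i, Δ i)) • v i,
      sum_smul_mem_convexHull_range (fun i => div_nonneg (hnonneg i) h1.le) ?_, ?_⟩
    · rw [← Finset.sum_div, hrest, div_self h1.ne']
    · simp only [AffineMap.lineMap_apply_module, Finset.smul_sum, smul_smul,
        mul_div_cancel₀ _ h1.ne']

/-- The new end point `lineMap u z (r / S)` lies between the two known points of `F`. -/
lemma exists_lineMap_eq_lineMap_of_le {r : ℝ} (hF : Convex ℝ F) (hz : z ∈ F)
    (hy : AffineMap.lineMap u z r ∈ F) (hr : 0 ≤ r) (hrS : r ≤ S) (hS : S ≤ 1) :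
    ∃ z' ∈ F, AffineMap.lineMap u z r = AffineMap.lineMap u z' S := by
  rcases (hr.trans hrS).eq_or_lt with rfl | hS0
  · exact ⟨z, hz, by rw [le_antisymm hrS hr]⟩
  · have hord := (hF.affine_preimage (AffineMap.lineMap u z : ℝ →ᵃ[ℝ] E)).ordConnected
    refine ⟨AffineMap.lineMap u z (r / S), hord.out (Set.mem_preimage.2 hy)
      (Set.mem_preimage.2 (by rwa [AffineMap.lineMap_apply_one]))
      ⟨le_div_self hr hS0 hS, (div_le_one hS0).2 hrS⟩, ?_⟩
    rw [AffineMap.lineMap_lineMap_right, mul_div_cancel₀ _ hS0.ne']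

lemma TransfersMass.exists_eq_lineMap (hy : TransfersMass lam v F S y) (hF : Convex ℝ F)
    (hyF : y ∈ F) (hsum : ∑ i, lam i = 1) (hS : S ≤ 1) :
    ∃ u ∈ convexHull ℝ (Set.range v), ∃ z ∈ F, y = AffineMap.lineMap u z S := by
  obtain ⟨Δ, z, hz, hΔ, heq, hle⟩ := hy
  obtain ⟨u, hu, hline⟩ := exists_sum_sub_smul_add_smul_eq_lineMap (v := v) hsum hΔ z
  rw [hline] at heq
  obtain ⟨z', hz', hline'⟩ := exists_lineMap_eq_lineMap_of_le hF hz (heq ▸ hyF)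
    (Finset.sum_nonneg fun i _ => (hΔ i).1) hle hS
  exact ⟨u, hu, z', hz', heq.trans hline'⟩

end Transfer

section Step

variable {E : Type*} [NormedAddCommGroup E] [InnerProductSpace ℝ E]

/-- Convexity and `β`-smoothness of `f` on `K`: the standing assumption on the objective. The
gradient is a datum `g`, required to be the gradient in the ambient space at each point of `K`. -/
structure IsConvexSmoothOn [CompleteSpace E] (K : Set E) (f : E → ℝ) (g : E → E) (β : ℝ) :
    Prop where
  convexOn : ConvexOn ℝ K f
  hasGradientAt : ∀ y ∈ K, HasGradientAt f (g y) y
  lipschitz : ∀ y ∈ K, ∀ z ∈ K, ‖g y - g z‖ ≤ β * ‖y - z‖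
  nonneg : 0 ≤ β

/-- The convex set `F` is the hull of the vertices (points of `V`) it contains, and `D` bounds its
diameter. This is what the analysis retains of a face of a polytope that contains all minimisers. -/
structure IsSpannedByVertices (V F : Set E) (D : ℝ) : Prop where
  convex : Convex ℝ F
  subset_convexHull : F ⊆ convexHull ℝ (V ∩ F)
  norm_sub_le : ∀ u ∈ F, ∀ z ∈ F, ‖u - z‖ ≤ D

/-- One iteration, from `x` to `x'`, of the fully corrective Frank-Wolfe method with a nearest
extreme point oracle over the vertex set `V`: `w` is the oracle's answer for the gradient `p` at `x`
and the parameter `ρ`, and `x'` minimises the quadratic model or `f` over the hull of `w` and the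
vertices `v` that represent `x`. -/
structure IsNEPStep (V : Set E) (f : E → ℝ) (β : ℝ) (p : E) (ρ : ℝ) {ι : Type*} [Fintype ι]
    (v : ι → E) (lam : ι → ℝ) (x w x' : E) : Prop where
  vertex_mem : ∀ i, v i ∈ V
  weight_nonneg : ∀ i, 0 ≤ lam i
  weight_sum : ∑ i, lam i = 1
  eq_sum : x = ∑ i, lam i • v i
  response_mem : w ∈ V
  response_le : ∀ u ∈ V,
    ⟪p, w⟫ + β * ρ * ‖w - x‖ ^ 2 ≤ ⟪p, u⟫ + β * ρ * ‖u - x‖ ^ 2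
  next_mem : x' ∈ convexHull ℝ (insert w (Set.range v))
  next_isMinOn :
    IsMinOn (fun y => ⟪p, y⟫ + β / 2 * ‖y - x‖ ^ 2) (convexHull ℝ (insert w (Set.range v))) x' ∨
      IsMinOn f (convexHull ℝ (insert w (Set.range v))) x'

lemma inner_sub_le_of_prox_le {A : Set E} {c R : ℝ} {p x w z : E} (hc : 0 ≤ c)
    (hw : ∀ u ∈ A, ⟪p, w⟫ + c * ‖w - x‖ ^ 2 ≤ ⟪p, u⟫ + c * ‖u - x‖ ^ 2)
    (hR : ∀ u ∈ A, ‖u - x‖ ^ 2 ≤ R) (hz : z ∈ convexHull ℝ A) :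
    ⟪p, w - z⟫ ≤ c * (R - ‖w - x‖ ^ 2) := by
  have hsub : convexHull ℝ A ⊆ {u | ⟪p, w⟫ - c * (R - ‖w - x‖ ^ 2) ≤ innerₗ E p u} := by
    refine convexHull_min (fun u hu => ?_) (convex_halfSpace_ge (innerₗ E p).isLinear _)
    have hcR := mul_le_mul_of_nonneg_left (hR u hu) hc
    simp only [Set.mem_ofPred_eq, innerₗ_apply_apply]
    linarith [hw u hu]
  have hzle : ⟪p, w⟫ - c * (R - ‖w - x‖ ^ 2) ≤ ⟪p, z⟫ := hsub hz
  rw [inner_sub_right]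
  linarith

variable {K V F : Set E} {f : E → ℝ} {β D ρ : ℝ} {ι : Type*} [Fintype ι] {v : ι → E} {lam : ι → ℝ}
  {p x w x' y z : E}

lemma IsNEPStep.mem (h : IsNEPStep V f β p ρ v lam x w x') (hK : Convex ℝ K) (hVK : V ⊆ K) :
    x ∈ K := by
  rw [h.eq_sum]
  exact hK.sum_mem (fun i _ => h.weight_nonneg i) h.weight_sum fun i _ => hVK (h.vertex_mem i)

lemma IsNEPStep.convexHull_subset (h : IsNEPStep V f β p ρ v lam x w x') (hK : Convex ℝ K)
    (hVK : V ⊆ K) : convexHull ℝ (insert w (Set.range v)) ⊆ K :=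
  convexHull_min (Set.insert_subset (hVK h.response_mem)
    (Set.range_subset_iff.2 fun i => hVK (h.vertex_mem i))) hK

lemma IsNEPStep.inner_response_sub_le (h : IsNEPStep V f β p ρ v lam x w x')
    (hF : IsSpannedByVertices V F D) (hc : 0 ≤ β * ρ) (hyF : y ∈ F) (hz : z ∈ F) :
    ⟪p, w - z⟫ ≤ β * ρ * (2 * (D ^ 2 + ‖x - y‖ ^ 2) - ‖w - x‖ ^ 2) := by
  refine inner_sub_le_of_prox_le hc (fun u hu => h.response_le u hu.1) (fun u hu => ?_)
    (hF.subset_convexHull hz)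
  have hD : ‖u - y‖ ^ 2 ≤ D ^ 2 :=
    pow_le_pow_left₀ (norm_nonneg _) (hF.norm_sub_le u hu.2 y hyF) 2
  calc ‖u - x‖ ^ 2 = ‖(u - y) + (y - x)‖ ^ 2 := by rw [sub_add_sub_cancel]
    _ ≤ 2 * (‖u - y‖ ^ 2 + ‖y - x‖ ^ 2) := norm_add_sq_le _ _
    _ ≤ 2 * (D ^ 2 + ‖x - y‖ ^ 2) := by rw [norm_sub_rev y x]; gcongr

variable [CompleteSpace E] {g : E → E} {X : Set E} {fstar α M S H q η : ℝ}

lemma IsNEPStep.next_le_model (h : IsNEPStep V f β (g x) ρ v lam x w x')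
    (hf : IsConvexSmoothOn K f g β) (hVK : V ⊆ K)
    (hy : y ∈ convexHull ℝ (insert w (Set.range v))) :
    f x' ≤ f x + ⟪g x, y - x⟫ + β / 2 * ‖y - x‖ ^ 2 := by
  have hK := hf.convexOn.1
  have hx := h.mem hK hVK
  have hsub := h.convexHull_subset hK hVK
  have hdescent : ∀ z ∈ K, f z ≤ f x + ⟪g x, z - x⟫ + β / 2 * ‖z - x‖ ^ 2 := fun z hz =>
    le_add_inner_add_sq_of_lipschitz_gradient hK hx hz hf.hasGradientAt
      fun u hu => hf.lipschitz u hu x hx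
  rcases h.next_isMinOn with hmin | hmin
  · have hmodel := isMinOn_iff.1 hmin y hy
    have hx' := hdescent x' (hsub h.next_mem)
    rw [inner_sub_right] at hx' ⊢
    linarith
  · exact (isMinOn_iff.1 hmin y hy).trans (hdescent y (hsub hy))

lemma IsNEPStep.exists_next_le_model (h : IsNEPStep V f β (g x) ρ v lam x w x')
    (hf : IsConvexSmoothOn K f g β) (hVK : V ⊆ K) (hF : Convex ℝ F) (hyF : y ∈ F)
    (hy : TransfersMass lam v F S y) (hS : S ≤ 1) (hη0 : 0 ≤ η) (hη1 : η ≤ 1) :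
    ∃ z ∈ F, f x' ≤ f x + η * (⟪g x, y - x⟫ + S * ⟪g x, w - z⟫)
      + β / 2 * (η ^ 2 * ‖y + S • (w - z) - x‖ ^ 2) := by
  obtain ⟨u, hu, z, hz, hline⟩ := hy.exists_eq_lineMap hF hyF h.weight_sum hS
  have hP := convex_convexHull ℝ (insert w (Set.range v))
  have hsub : convexHull ℝ (Set.range v) ⊆ convexHull ℝ (insert w (Set.range v)) :=
    convexHull_mono (Set.subset_insert _ _)
  have hxP : x ∈ convexHull ℝ (insert w (Set.range v)) :=
    hsub (h.eq_sum ▸ sum_smul_mem_convexHull_range h.weight_nonneg h.weight_sum)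
  have hwP : w ∈ convexHull ℝ (insert w (Set.range v)) :=
    subset_convexHull ℝ _ (Set.mem_insert _ _)
  have htarget : AffineMap.lineMap u w S = y + S • (w - z) := by
    rw [hline, AffineMap.lineMap_apply_module, AffineMap.lineMap_apply_module]
    module
  have hle := h.next_le_model hf hVK (hP.lineMap_mem hxP
    (htarget ▸ hP.lineMap_mem (hsub hu) hwP ⟨hy.nonneg, hS⟩) ⟨hη0, hη1⟩)
  refine ⟨z, hz, hle.trans_eq ?_⟩
  have hinner : ⟪g x, y + S • (w - z) - x⟫ = ⟪g x, y - x⟫ + S * ⟪g x, w - z⟫ := by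
    rw [add_sub_right_comm, inner_add_right, inner_smul_right]
  rw [AffineMap.lineMap_apply_module', add_sub_cancel_right, inner_smul_right, hinner, norm_smul,
    mul_pow, Real.norm_eq_abs, sq_abs]

lemma IsNEPStep.gap_next_le (h : IsNEPStep V f β (g x) (η * S) v lam x w x')
    (hf : IsConvexSmoothOn K f g β) (hVK : V ⊆ K) (hF : IsSpannedByVertices V F D) (hyK : y ∈ K)
    (hyF : y ∈ F) (hy : TransfersMass lam v F S y) (hS : S ≤ 1) (hη0 : 0 ≤ η) (hη1 : η ≤ 1) :
    f x' - f y ≤ (1 - η) * (f x - f y) + β * η ^ 2 * (2 * ‖x - y‖ ^ 2 + 4 * S ^ 2 * D ^ 2) := by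
  have hβ := hf.nonneg
  have hS0 := hy.nonneg
  have hx := h.mem hf.convexOn.1 hVK
  obtain ⟨z, hz, hmodel⟩ := h.exists_next_le_model hf hVK hF.convex hyF hy hS hη0 hη1
  have hgap : ⟪g x, y - x⟫ ≤ -(f x - f y) := by
    linarith [add_inner_le_of_convexOn hf.convexOn hx hyK (hf.hasGradientAt x hx)]
  have horacle := h.inner_response_sub_le hF (by positivity) hyF hz
  have hdist := norm_add_smul_sub_sub_sq_le (x := x) (w := w) S (hF.norm_sub_le y hyF z hz)
  have hslack : 0 ≤ β * η ^ 2 * (2 * ‖x - y‖ ^ 2) * (2 * S * (1 - S)) := by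
    have := sub_nonneg.2 hS
    positivity
  calc f x' - f y
      ≤ f x + η * (-(f x - f y)
          + S * (β * (η * S) * (2 * (D ^ 2 + ‖x - y‖ ^ 2) - ‖w - x‖ ^ 2)))
        + β / 2 * (η ^ 2 * (4 * ((1 - S) ^ 2 * ‖x - y‖ ^ 2 + S ^ 2 * D ^ 2)
          + 2 * S ^ 2 * ‖w - x‖ ^ 2)) - f y := by
        grw [hmodel, hgap, horacle, hdist]
    _ ≤ _ := by linarith

lemma min_one_sq_le {a : ℝ} (ha : 0 ≤ a) : min a 1 ^ 2 ≤ a ^ 2 :=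
  pow_le_pow_left₀ (le_min ha zero_le_one) (min_le_left _ _) 2

lemma one_sub_mul_add_le_mul_exp {h r : ℝ} (hM : 1 / 2 ≤ M) (hH : 0 ≤ H) (hh : h ≤ H)
    (hr : r ≤ M * H) :
    (1 - 1 / (2 * M)) * h + (1 / (2 * M)) ^ 2 * r ≤ H * Real.exp (-(1 / (4 * M))) := by
  have : 0 < M := by linarith
  have hη : 0 ≤ 1 - 1 / (2 * M) := sub_nonneg.2 ((div_le_one (by positivity)).2 (by linarith))
  calc (1 - 1 / (2 * M)) * h + (1 / (2 * M)) ^ 2 * r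
      ≤ (1 - 1 / (2 * M)) * H + (1 / (2 * M)) ^ 2 * (M * H) := by gcongr
    _ = H * (-(1 / (4 * M)) + 1) := by field_simp; ring
    _ ≤ _ := by gcongr; exact Real.add_one_le_exp _

lemma IsNEPStep.gap_next_le_mul_exp (h : IsNEPStep V f β (g x) (S / (2 * M)) v lam x w x')
    (hf : IsConvexSmoothOn K f g β) (hVK : V ⊆ K) (hF : IsSpannedByVertices V F D) (hyK : y ∈ K)
    (hyF : y ∈ F) (hy : TransfersMass lam v F S y) (hS : S ≤ 1) (hα : 0 < α)
    (hgrowth : ‖x - y‖ ^ 2 ≤ 2 / α * (f x - f y)) (hM : 1 / 2 ≤ M)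
    (hMq : 4 * β / α + 4 * β * D ^ 2 * q ≤ M) (hSH : S ^ 2 ≤ q * H) (hgap : f x - f y ≤ H) :
    f x' - f y ≤ H * Real.exp (-(1 / (4 * M))) := by
  have hβ := hf.nonneg
  have hH : 0 ≤ H :=
    (nonneg_of_mul_nonneg_right ((sq_nonneg _).trans hgrowth) (by positivity)).trans hgap
  have herror : β * (2 * ‖x - y‖ ^ 2 + 4 * S ^ 2 * D ^ 2) ≤ M * H := calc
    β * (2 * ‖x - y‖ ^ 2 + 4 * S ^ 2 * D ^ 2)
      ≤ β * (2 * (2 / α * H) + 4 * (q * H) * D ^ 2) := by grw [hgrowth, hgap, hSH]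
    _ = (4 * β / α + 4 * β * D ^ 2 * q) * H := by ring
    _ ≤ M * H := by gcongr
  have hη : 1 / (2 * M) ≤ 1 := (div_le_one (by linarith)).2 (by linarith)
  rw [div_eq_mul_one_div, mul_comm S] at h
  have hnext := h.gap_next_le hf hVK hF hyK hyF hy hS (one_div_nonneg.2 (by linarith)) hη
  exact (hnext.trans_eq (by ring)).trans (one_sub_mul_add_le_mul_exp hM hH hgap herror)

lemma exists_closest_minimizer (hf : IsConvexSmoothOn K f g β) (hK : IsClosed K)
    (hfstar : ∀ y ∈ K, fstar ≤ f y) (hne : {y | y ∈ K ∧ f y = fstar}.Nonempty) (x : E) :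
    ∃ y ∈ {y | y ∈ K ∧ f y = fstar}, infDist x {y | y ∈ K ∧ f y = fstar} = dist x y := by
  have hcont : ContinuousOn f K := fun y hy =>
    (hf.hasGradientAt y hy).continuousAt.continuousWithinAt
  have hclosed : IsClosed {y | y ∈ K ∧ f y = fstar} :=
    hcont.preimage_isClosed_of_isClosed hK isClosed_singleton
  have hconvex : Convex ℝ {y | y ∈ K ∧ f y = fstar} := by
    convert hf.convexOn.convex_le fstar using 1
    ext y
    exact and_congr_right fun hy => ⟨fun h => h.le, fun h => h.antisymm (hfstar y hy)⟩
  exact exists_infDist_eq_dist_of_isComplete_convex hne hclosed.isComplete hconvex x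

lemma IsNEPStep.gap_next_le_mul_exp_of_closest {a m : ℝ}
    (h : IsNEPStep V f β (g x) ρ v lam x w x') (hf : IsConvexSmoothOn K f g β) (hK : IsClosed K)
    (hVK : V ⊆ K) (hfstar : ∀ u ∈ K, fstar ≤ f u) (hX : X = {u | u ∈ K ∧ f u = fstar})
    (hne : X.Nonempty) (hα : 0 < α) (hQG : ∀ u ∈ K, infDist u X ^ 2 ≤ 2 / α * (f u - fstar))
    (hF : IsSpannedByVertices V F D) (hXF : X ⊆ F)
    (hclose : ∀ y ∈ X, (∀ u ∈ X, ‖x - y‖ ≤ ‖x - u‖) → TransfersMass lam v F m y)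
    (hM : max (4 * β / α + 4 * β * D ^ 2 * q) (1 / 2) ≤ M) (ha : 0 ≤ a)
    (hρ : ρ = min a 1 / (2 * M)) (hm : m ≤ min a 1) (haH : a ^ 2 ≤ q * H) (hgap : f x - fstar ≤ H) :
    f x' - fstar ≤ H * Real.exp (-(1 / (4 * M))) := by
  obtain ⟨y, hyX, hdist⟩ : ∃ y ∈ X, infDist x X = dist x y := by
    subst hX
    exact exists_closest_minimizer hf hK hfstar hne x
  have hmin : ∀ u ∈ X, ‖x - y‖ ≤ ‖x - u‖ := by
    simpa only [← dist_eq_norm, ← hdist] using fun u hu => infDist_le_dist_of_mem hu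
  have hgrowth := hQG x (h.mem hf.convexOn.1 hVK)
  obtain ⟨hyK, rfl⟩ := hX.subset hyX
  rw [hdist, dist_eq_norm] at hgrowth
  exact (hρ ▸ h).gap_next_le_mul_exp hf hVK hF hyK (hXF hyX) ((hclose y hyX hmin).mono hm)
    (min_le_right _ _) hα hgrowth ((le_max_right _ _).trans hM) ((le_max_left _ _).trans hM)
    ((min_one_sq_le ha).trans haH) hgap

end Step

section Schedule

variable {δ κ h H m e : ℝ}

/-- The bound that the decomposition property with parameters `δ` and `κ` imposes, at gap `h`, on
the mass to be moved into the face of the minimisers. -/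
noncomputable def massBound (δ κ h : ℝ) : ℝ := min 1 (δ⁻¹ * h + √(κ * h))

lemma massBound_le_min_sqrt (hκ : 2 * κ ≤ m) (hδ : δ⁻¹ ≤ m) (hm : 0 ≤ m) (hh : 0 ≤ h)
    (hhH : h ≤ H) : massBound δ κ h ≤ min √(2 * m * H) 1 := by
  refine le_min ?_ (min_le_left _ _)
  have hmono : √(2 * m * h) ≤ √(2 * m * H) := by gcongr
  refine le_trans ?_ hmono
  rcases le_total 1 √(2 * m * h) with hr | hr
  · exact (min_le_left _ _).trans hr
  have hsq : √(2 * m * h) ^ 2 = 2 * m * h := Real.sq_sqrt (by positivity)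
  have hlinear : δ⁻¹ * h ≤ √(2 * m * h) / 2 := calc
    δ⁻¹ * h ≤ m * h := by gcongr
    _ = √(2 * m * h) * √(2 * m * h) / 2 := by rw [← sq, hsq]; ring
    _ ≤ √(2 * m * h) * 1 / 2 := by gcongr
    _ = √(2 * m * h) / 2 := by rw [mul_one]
  have hsqrt : √(κ * h) ≤ √(2 * m * h) / 2 := by
    refine Real.sqrt_le_iff.2 ⟨by positivity, ?_⟩
    rw [div_pow, hsq]
    linarith [mul_le_mul_of_nonneg_right hκ hh]
  exact (min_le_right _ _).trans (by linarith)

lemma massBound_le_min_mul (hδ : 0 < δ) (hκ : 0 ≤ κ) (he0 : 0 ≤ e) (he1 : e ≤ 1)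
    (hh : h ≤ δ ^ 2 * κ * e ^ 2) : massBound δ κ h ≤ min (2 * δ * κ * e) 1 := by
  refine le_min ((min_le_right _ _).trans ?_) (min_le_left _ _)
  have hlinear : δ⁻¹ * h ≤ δ * κ * e := calc
    δ⁻¹ * h ≤ δ⁻¹ * (δ ^ 2 * κ * e ^ 2) := by gcongr
    _ = δ * κ * e * e := by field_simp
    _ ≤ δ * κ * e := mul_le_of_le_one_right (by positivity) he1
  have hsqrt : √(κ * h) ≤ δ * κ * e := by
    refine Real.sqrt_le_iff.2 ⟨by positivity, ?_⟩
    calc κ * h ≤ κ * (δ ^ 2 * κ * e ^ 2) := by gcongr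
      _ = (δ * κ * e) ^ 2 := by ring
  linarith

lemma exp_neg_div_four_mul_eq_sq (r M : ℝ) :
    Real.exp (-(r / (4 * M))) = Real.exp (-(r / (8 * M))) ^ 2 := by
  rw [← Real.exp_nat_mul]
  congr 1
  push_cast
  ring

lemma mul_exp_neg_le_of_log_div_le {C D r : ℝ} (hC : 0 ≤ C) (hD : 0 < D)
    (hr : Real.log (C / D) ≤ r) : C * Real.exp (-r) ≤ D := by
  rcases hC.eq_or_lt with rfl | hC
  · simpa using hD.le
  · rw [Real.exp_neg, ← div_eq_mul_inv, div_le_iff₀ (Real.exp_pos r), ← div_le_iff₀' hD]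
    exact (Real.log_le_iff_le_exp (by positivity)).1 hr

lemma le_mul_exp_of_contraction {a : ℕ → ℝ} {A M : ℝ} {s t : ℕ} (hst : s ≤ t) (hs : a s ≤ A)
    (hstep : ∀ r, s ≤ r → r < t → a r ≤ A * Real.exp (-(((r : ℝ) - s) / (4 * M))) →
      a (r + 1) ≤ A * Real.exp (-(((r : ℝ) - s) / (4 * M))) * Real.exp (-(1 / (4 * M)))) :
    a t ≤ A * Real.exp (-(((t : ℝ) - s) / (4 * M))) := by
  induction t, hst using Nat.le_induction with
  | base => simpa using hs
  | succ t hst ih =>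
    have ht := hstep t hst t.lt_succ_self (ih fun r hr hrt => hstep r hr (hrt.trans t.lt_succ_self))
    refine ht.trans_eq ?_
    rw [mul_assoc, ← Real.exp_add]
    congr 2
    push_cast
    ring

end Schedule

theorem fw_nep_polytope_linear_rate_strict_complementarity_phase_two_general {E : Type*}
    [NormedAddCommGroup E] [InnerProductSpace ℝ E] [CompleteSpace E]
    {K V Xstar Fstar : Set E} {f : E → ℝ} {g : E → E} {α β DF fstar δ κ C M₁ M₂ : ℝ}
    (hf : IsConvexSmoothOn K f g β) (hK : IsClosed K) (hVK : V ⊆ K)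
    (hfstar : ∀ y ∈ K, fstar ≤ f y) (hXstar : Xstar = {y | y ∈ K ∧ f y = fstar})
    (hXne : Xstar.Nonempty) (hα : 0 < α)
    (hQG : ∀ y ∈ K, infDist y Xstar ^ 2 ≤ 2 / α * (f y - fstar))
    (hF : IsSpannedByVertices V Fstar DF) (hXF : Xstar ⊆ Fstar) (hδ : 0 < δ) (hκ : 0 < κ)
    (hM₁ : max (4 * β / α + 8 * β * DF ^ 2 * max (2 * κ) δ⁻¹) (1 / 2) ≤ M₁)
    (hM₂ : max (4 * β / α + 16 * β * κ * DF ^ 2) (1 / 2) ≤ M₂)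
    {τ : ℕ} (hτ1 : 1 ≤ τ) (hτ : 4 * M₁ * Real.log (C / (δ ^ 2 * κ)) + 1 ≤ τ) {ρ : ℕ → ℝ}
    (hρ₁ : ∀ t : ℕ, 1 ≤ t → t < τ → ρ t =
      min √(2 * max (2 * κ) δ⁻¹ * C * Real.exp (-(((t : ℝ) - 1) / (4 * M₁)))) 1 / (2 * M₁))
    (hρ₂ : ∀ t : ℕ, τ ≤ t → ρ t =
      min (2 * δ * κ * Real.exp (-(((t : ℝ) - τ) / (8 * M₂)))) 1 / (2 * M₂))
    {ι : ℕ → Type*} [∀ t, Fintype (ι t)] {x w : ℕ → E} {v : ∀ t, ι t → E} {lam : ∀ t, ι t → ℝ}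
    (hC : f (x 1) - fstar ≤ C)
    (hstep : ∀ t, 1 ≤ t →
      IsNEPStep V f β (g (x t)) (ρ t) (v t) (lam t) (x t) (w t) (x (t + 1)))
    (hclose : ∀ t, 1 ≤ t → ∀ y ∈ Xstar, (∀ u ∈ Xstar, ‖x t - y‖ ≤ ‖x t - u‖) →
      TransfersMass (lam t) (v t) Fstar (massBound δ κ (f (x t) - fstar)) y)
    {t : ℕ} (ht : τ ≤ t) :
    f (x t) - fstar ≤ δ ^ 2 * κ * Real.exp (-(((t : ℝ) - τ) / (4 * M₂))) := by
  have hM₁0 : 0 < M₁ := by linarith [(le_max_right _ _).trans hM₁]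
  have hM₂0 : 0 < M₂ := by linarith [(le_max_right _ _).trans hM₂]
  have hgap0 : ∀ r, 1 ≤ r → 0 ≤ f (x r) - fstar := fun r hr =>
    sub_nonneg.2 (hfstar _ ((hstep r hr).mem hf.convexOn.1 hVK))
  have hC0 : 0 ≤ C := (hgap0 1 le_rfl).trans hC
  have hm0 : 0 ≤ max (2 * κ) δ⁻¹ := le_max_of_le_left (by positivity)
  have hcontr (r : ℕ) (hr : 1 ≤ r) {M a H q : ℝ} :=
    (hstep r hr).gap_next_le_mul_exp_of_closest (M := M) (a := a) (H := H) (q := q)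
      hf hK hVK hfstar hXstar hXne hα hQG hF hXF (hclose r hr)
  have hphase₁ : f (x τ) - fstar ≤ C * Real.exp (-(((τ : ℝ) - (1 : ℕ)) / (4 * M₁))) := by
    refine le_mul_exp_of_contraction (a := fun r => f (x r) - fstar) hτ1 hC fun r hr hrτ hgap => ?_
    rw [Nat.cast_one] at hgap ⊢
    refine hcontr r hr (q := 2 * max (2 * κ) δ⁻¹) ?_ ?_ (hρ₁ r hr hrτ) ?_ ?_ hgap
    · rwa [show 4 * β * DF ^ 2 * (2 * max (2 * κ) δ⁻¹) = 8 * β * DF ^ 2 * max (2 * κ) δ⁻¹ by ring]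
    · positivity
    · rw [mul_assoc _ C]
      exact massBound_le_min_sqrt (le_max_left _ _) (le_max_right _ _) hm0 (hgap0 r hr) hgap
    · rw [Real.sq_sqrt (by positivity)]
      exact (mul_assoc _ _ _).le
  have hstart : f (x τ) - fstar ≤ δ ^ 2 * κ := by
    refine hphase₁.trans (mul_exp_neg_le_of_log_div_le hC0 (by positivity) ?_)
    rw [Nat.cast_one, le_div_iff₀ (by positivity)]
    linarith
  refine le_mul_exp_of_contraction (a := fun r => f (x r) - fstar) ht hstart fun r hr _ hgap => ?_
  have hexp : Real.exp (-(((r : ℝ) - τ) / (8 * M₂))) ≤ 1 :=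
    Real.exp_le_one_iff.2 (neg_nonpos.2
      (div_nonneg (sub_nonneg.2 (Nat.cast_le.2 hr)) (by positivity)))
  have hgap' := hgap
  rw [exp_neg_div_four_mul_eq_sq] at hgap'
  refine hcontr r (hτ1.trans hr) (q := 4 * κ) ?_ ?_ (hρ₂ r hr)
    (massBound_le_min_mul hδ hκ.le (Real.exp_nonneg _) hexp hgap') ?_ hgap
  · rwa [show 4 * β * DF ^ 2 * (4 * κ) = 16 * β * κ * DF ^ 2 by ring]
  · positivity
  · rw [exp_neg_div_four_mul_eq_sq]
    exact le_of_eq (by ring)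

/-- improved linear convergence of the NEP oracle-based
fully-corrective Frank-Wolfe variant in the second phase, under quadratic
growth and the strict-complementarity-type decomposition property
(Theorem 4, part 2). -/
theorem fw_nep_polytope_linear_rate_strict_complementarity_phase_two {d : ℕ}
    (V : Set (EuclideanSpace ℝ (Fin d))) (hVfin : V.Finite)
    (K : Set (EuclideanSpace ℝ (Fin d))) (hK : K = convexHull ℝ V)
    (hVext : V = K.extremePoints ℝ)
    (f : EuclideanSpace ℝ (Fin d) → ℝ)
    (g : EuclideanSpace ℝ (Fin d) → EuclideanSpace ℝ (Fin d))
    (hfconv : ConvexOn ℝ Set.univ f)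
    (hgrad : ∀ y, HasGradientAt f (g y) y)
    (β : ℝ) (hβ : 0 < β)
    (hsmooth : ∀ y z, ‖g y - g z‖ ≤ β * ‖y - z‖)
    (fstar : ℝ) (hfstar : ∀ y ∈ K, fstar ≤ f y)
    (Xstar : Set (EuclideanSpace ℝ (Fin d)))
    (hXstar : Xstar = {y | y ∈ K ∧ f y = fstar}) (hXne : Xstar.Nonempty)
    -- quadratic growth
    (α : ℝ) (hα : 0 < α)
    (hQG : ∀ y ∈ K, infDist y Xstar ^ 2 ≤ 2 / α * (f y - fstar))
    -- the set F*
    (Fstar : Set (EuclideanSpace ℝ (Fin d)))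
    (hFK : Fstar ⊆ K) (hFconv : Convex ℝ Fstar) (hXF : Xstar ⊆ Fstar)
    (hFvert : ∀ y ∈ Fstar, y ∈ convexHull ℝ (V ∩ Fstar))
    (DF : ℝ) (hDF : ∀ u ∈ Fstar, ∀ w ∈ Fstar, ‖u - w‖ ≤ DF)
    -- constants
    (δ κ C M₁ M₂ : ℝ) (hδ : 0 < δ) (hκ : 0 < κ) (hκδ : 2 * κ ≤ δ⁻¹)
    (hM₁ : max (4 * β / α + 8 * β * DF ^ 2 * max (2 * κ) δ⁻¹) (1 / 2) ≤ M₁)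
    (hM₂ : max (4 * β / α + 16 * β * κ * DF ^ 2) (1 / 2) ≤ M₂)
    (τ : ℕ) (hτ1 : 1 ≤ τ)
    (hτ : 4 * M₁ * Real.log (C / (δ ^ 2 * κ)) + 1 ≤ (τ : ℝ))
    -- step-size parameters: phase one for t < τ, phase two for t ≥ τ
    (ρ : ℕ → ℝ)
    (hρ₁ : ∀ t : ℕ, 1 ≤ t → t < τ → ρ t =
      min (Real.sqrt (2 * max (2 * κ) δ⁻¹ * C * Real.exp (-(((t : ℝ) - 1) / (4 * M₁))))) 1
        / (2 * M₁))
    (hρ₂ : ∀ t : ℕ, τ ≤ t → ρ t =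
      min (2 * δ * κ * Real.exp (-(((t : ℝ) - (τ : ℝ)) / (8 * M₂)))) 1
        / (2 * M₂))
    -- the iterates and their vertex decompositions
    (x : ℕ → EuclideanSpace ℝ (Fin d))
    (k : ℕ → ℕ) (vv : ∀ t : ℕ, Fin (k t) → EuclideanSpace ℝ (Fin d))
    (lam : ∀ t : ℕ, Fin (k t) → ℝ) (w : ℕ → EuclideanSpace ℝ (Fin d))
    (hx1 : x 1 ∈ V) (hC : f (x 1) - fstar ≤ C)
    (hvvV : ∀ t, 1 ≤ t → ∀ i, vv t i ∈ V)
    (hlam0 : ∀ t, 1 ≤ t → ∀ i, 0 ≤ lam t i)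
    (hlam1 : ∀ t, 1 ≤ t → ∑ i, lam t i = 1)
    (hxdecomp : ∀ t, 1 ≤ t → x t = ∑ i, lam t i • vv t i)
    (hwV : ∀ t, 1 ≤ t → w t ∈ V)
    (hwopt : ∀ t, 1 ≤ t → ∀ u ∈ V,
      ⟪g (x t), w t⟫ + β * ρ t * ‖w t - x t‖ ^ 2
        ≤ ⟪g (x t), u⟫ + β * ρ t * ‖u - x t‖ ^ 2)
    (hstep : ∀ t, 1 ≤ t →
      (x (t + 1) ∈ convexHull ℝ (insert (w t) (Set.range (vv t))) ∧
        ∀ y ∈ convexHull ℝ (insert (w t) (Set.range (vv t))),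
          ⟪g (x t), x (t + 1)⟫ + β / 2 * ‖x (t + 1) - x t‖ ^ 2
            ≤ ⟪g (x t), y⟫ + β / 2 * ‖y - x t‖ ^ 2) ∨
      (x (t + 1) ∈ convexHull ℝ (insert (w t) (Set.range (vv t))) ∧
        ∀ y ∈ convexHull ℝ (insert (w t) (Set.range (vv t))), f (x (t + 1)) ≤ f y))
    -- the vertex-decomposition property relative to the closest optimal point
    (hclose : ∀ t, 1 ≤ t → ∀ xst ∈ Xstar, (∀ y ∈ Xstar, ‖x t - xst‖ ≤ ‖x t - y‖) →
      ∃ Δ : Fin (k t) → ℝ, ∃ z ∈ Fstar,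
        (∀ i, Δ i ∈ Set.Icc 0 (lam t i)) ∧
        xst = ∑ i, (lam t i - Δ i) • vv t i + (∑ i, Δ i) • z ∧
        ∑ i, Δ i ≤ min 1 (δ⁻¹ * (f (x t) - fstar)
          + Real.sqrt (κ * (f (x t) - fstar)))) :
    ∀ t : ℕ, τ ≤ t →
      f (x t) - fstar ≤ δ ^ 2 * κ * Real.exp (-(((t : ℝ) - (τ : ℝ)) / (4 * M₂))) := by
  have hKconv : Convex ℝ K := hK ▸ convex_convexHull ℝ V
  have hf : IsConvexSmoothOn K f g β :=
    ⟨hfconv.subset (Set.subset_univ K) hKconv, fun y _ => hgrad y, fun y _ z _ => hsmooth y z,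
      hβ.le⟩
  have hKclosed : IsClosed K := hK ▸ (hVfin.isCompact_convexHull ℝ).isClosed
  have hnep (t : ℕ) (ht : 1 ≤ t) :
      IsNEPStep V f β (g (x t)) (ρ t) (vv t) (lam t) (x t) (w t) (x (t + 1)) :=
    ⟨hvvV t ht, hlam0 t ht, hlam1 t ht, hxdecomp t ht, hwV t ht, hwopt t ht,
      (hstep t ht).elim And.left And.left, (hstep t ht).imp And.right And.right⟩
  exact fun t ht => fw_nep_polytope_linear_rate_strict_complementarity_phase_two_general hf hKclosed
    (hK ▸ subset_convexHull ℝ V) hfstar hXstar hXne hα hQG ⟨hFconv, hFvert, hDF⟩ hXF hδ hκ hM₁ hM₂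
    hτ1 hτ hρ₁ hρ₂ hC hnep hclose ht
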